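/- arXiv:1806.11422 — 5 statements merged into one kernel-verified Lean document; each statement's English description precedes it below -/
import Mathlib

section
/- Let x > 0. The uncertain transfer function value T(θ) = (e + Z_N·θ)/(1 + Z_D·θ) is {x,y,z}-dissipative (i.e. x|T(θ)|² + 2Re(conj(y)·T(θ)) + z ≤ 0) for every θ in the ellipsoid U if and only if there exist a real scalar ξ ≥ 0 and a real skew-symmetric matrix 𝒳 ∈ ℝ^{(n+1)×(n+1)} such that the Hermitian (n+2)×(n+2) complex matrix [[−α, λ],[λ*, −A₁ − ξB + i𝒳]] is negative semidefinite, where λ = [Z_N + (y/x)Z_D , e + y/x] ∈ ℂ^{1×(n+1)} and α = |y|²/x² − z/x. -/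
open Matrix
open scoped ComplexOrder

/-- A complex number `Δ` is `{x,y,z}`-dissipative if `x|Δ|² + 2Re(conj(y)·Δ) + z ≤ 0`. -/
def Dissipative (x : ℝ) (y : ℂ) (z : ℝ) (Δ : ℂ) : Prop :=
  x * Complex.normSq Δ + 2 * (starRingEnd ℂ y * Δ).re + z ≤ 0

/-- The transfer function value `T(θ) = (e + Z_N·θ)/(1 + Z_D·θ)`. -/
noncomputable def Tval {n : ℕ} (e : ℂ) (ZN ZD : Fin n → ℂ) (θ : Fin n → ℝ) : ℂ :=
  (e + ∑ i, ZN i * (θ i : ℂ)) / (1 + ∑ i, ZD i * (θ i : ℂ))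

/-- The ellipsoid `U = {θ ∈ ℝⁿ : (θ−θ̂)ᵀP⁻¹(θ−θ̂) < χ}`. -/
noncomputable def ellipsoid {n : ℕ} (P : Matrix (Fin n) (Fin n) ℝ) (θhat : Fin n → ℝ)
    (χ : ℝ) : Set (Fin n → ℝ) :=
  {θ | (θ - θhat) ⬝ᵥ P⁻¹ *ᵥ (θ - θhat) < χ}

/-- The Hermitian matrix `A₁ = [[Z_D*Z_D, Z_D*],[Z_D, 1]] ∈ ℂ^{(n+1)×(n+1)}`. -/
def A1mat {n : ℕ} (ZD : Fin n → ℂ) : Matrix (Fin n ⊕ Unit) (Fin n ⊕ Unit) ℂ :=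
  Matrix.fromBlocks
    (Matrix.of fun i j => starRingEnd ℂ (ZD i) * ZD j)
    (Matrix.of fun i _ => starRingEnd ℂ (ZD i))
    (Matrix.of fun _ j => ZD j)
    (Matrix.of fun _ _ => 1)

/-- The real symmetric matrix `B = [[P⁻¹, −P⁻¹θ̂],[−θ̂ᵀP⁻¹, θ̂ᵀP⁻¹θ̂ − χ]]`. -/
noncomputable def Bmat {n : ℕ} (P : Matrix (Fin n) (Fin n) ℝ) (θhat : Fin n → ℝ) (χ : ℝ) :
    Matrix (Fin n ⊕ Unit) (Fin n ⊕ Unit) ℝ :=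
  Matrix.fromBlocks P⁻¹
    (Matrix.of fun i _ => -(P⁻¹ *ᵥ θhat) i)
    (Matrix.of fun _ j => -(θhat ᵥ* P⁻¹) j)
    (Matrix.of fun _ _ => θhat ⬝ᵥ P⁻¹ *ᵥ θhat - χ)

/-- The row vector `λ = [Z_N + (y/x)Z_D , e + y/x] ∈ ℂ^{1×(n+1)}`. -/
noncomputable def lamVec {n : ℕ} (e : ℂ) (ZN ZD : Fin n → ℂ) (x : ℝ) (y : ℂ) :
    Fin n ⊕ Unit → ℂ :=
  Sum.elim (fun i => ZN i + (y / (x : ℂ)) * ZD i) (fun _ => e + y / (x : ℂ))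

/-- The Hermitian `(n+2)×(n+2)` matrix `[[−α, λ],[λ*, −A₁ − ξB + i𝒳]]`. -/
noncomputable def bigMat {n : ℕ} (e : ℂ) (ZN ZD : Fin n → ℂ)
    (P : Matrix (Fin n) (Fin n) ℝ) (θhat : Fin n → ℝ) (χ : ℝ)
    (x : ℝ) (y : ℂ) (z : ℝ) (ξ : ℝ) (X : Matrix (Fin n ⊕ Unit) (Fin n ⊕ Unit) ℝ) :
    Matrix (Unit ⊕ (Fin n ⊕ Unit)) (Unit ⊕ (Fin n ⊕ Unit)) ℂ :=
  Matrix.fromBlocks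
    (Matrix.of fun _ _ => -((Complex.normSq y / x ^ 2 - z / x : ℝ) : ℂ))
    (Matrix.of fun _ j => lamVec e ZN ZD x y j)
    (Matrix.of fun i _ => starRingEnd ℂ (lamVec e ZN ZD x y i))
    (-(A1mat ZD) - (ξ : ℂ) • (Bmat P θhat χ).map (fun b => (b : ℂ)) +
      Complex.I • X.map (fun b => (b : ℂ)))


lemma slem_expand {m : Type*} [Fintype m] (F : Matrix m m ℝ) (u v : m → ℝ) (t : ℝ) :
    (u + t • v) ⬝ᵥ F *ᵥ (u + t • v) =
      u ⬝ᵥ F *ᵥ u + t * (u ⬝ᵥ F *ᵥ v + v ⬝ᵥ F *ᵥ u) + t ^ 2 * (v ⬝ᵥ F *ᵥ v) := by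
  simp only [Matrix.mulVec_add, Matrix.mulVec_smul, add_dotProduct, dotProduct_add,
    smul_dotProduct, dotProduct_smul, smul_eq_mul]
  ring

lemma slem {m : Type*} [Fintype m] (F B : Matrix m m ℝ) (v0 : m → ℝ)
    (h0 : v0 ⬝ᵥ B *ᵥ v0 < 0)
    (h : ∀ v : m → ℝ, v ⬝ᵥ B *ᵥ v < 0 → 0 ≤ v ⬝ᵥ F *ᵥ v) :
    ∃ ξ : ℝ, 0 ≤ ξ ∧ ∀ v : m → ℝ, 0 ≤ v ⬝ᵥ F *ᵥ v + ξ * (v ⬝ᵥ B *ᵥ v) := by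
  -- the boundary case
  have hz : ∀ v : m → ℝ, v ⬝ᵥ B *ᵥ v = 0 → 0 ≤ v ⬝ᵥ F *ᵥ v := by
    intro v hv
    obtain ⟨s, hs2, hs⟩ : ∃ s : ℝ, s ^ 2 = 1 ∧ s * (v ⬝ᵥ B *ᵥ v0 + v0 ⬝ᵥ B *ᵥ v) ≤ 0 := by
      rcases le_total (v ⬝ᵥ B *ᵥ v0 + v0 ⬝ᵥ B *ᵥ v) 0 with h | h
      · exact ⟨1, by norm_num, by linarith⟩
      · exact ⟨-1, by norm_num, by linarith⟩
    set c := s * (v ⬝ᵥ F *ᵥ v0 + v0 ⬝ᵥ F *ᵥ v)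
    have key : ∀ ε : ℝ, 0 < ε → 0 ≤ v ⬝ᵥ F *ᵥ v + ε * c + ε ^ 2 * (v0 ⬝ᵥ F *ᵥ v0) := by
      intro ε hε
      have h1 := h (v + (ε * s) • v0) (by
        rw [slem_expand, hv, mul_pow, hs2]
        have := mul_nonpos_of_nonneg_of_nonpos hε.le hs
        have := mul_neg_of_pos_of_neg (pow_pos hε 2) h0
        linarith)
      rw [slem_expand, mul_pow, hs2] at h1
      simp only [c]; linarith
    have ht : Filter.Tendsto (fun ε : ℝ => v ⬝ᵥ F *ᵥ v + ε * c + ε ^ 2 * (v0 ⬝ᵥ F *ᵥ v0))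
        (nhdsWithin 0 (Set.Ioi 0)) (nhds (v ⬝ᵥ F *ᵥ v)) := by
      have : Continuous (fun ε : ℝ => v ⬝ᵥ F *ᵥ v + ε * c + ε ^ 2 * (v0 ⬝ᵥ F *ᵥ v0)) := by
        fun_prop
      have h2 := (this.tendsto 0).mono_left (nhdsWithin_le_nhds (s := Set.Ioi (0:ℝ)))
      simpa using h2
    refine ge_of_tendsto ht ?_
    filter_upwards [self_mem_nhdsWithin] with ε hε
    exact key ε hε
  -- the mixed case
  have hm : ∀ u v : m → ℝ, 0 < u ⬝ᵥ B *ᵥ u → v ⬝ᵥ B *ᵥ v < 0 →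
      0 ≤ (v ⬝ᵥ F *ᵥ v) * (u ⬝ᵥ B *ᵥ u) - (u ⬝ᵥ F *ᵥ u) * (v ⬝ᵥ B *ᵥ v) := by
    intro u v hu hv
    have eB := slem_expand B u v
    have eF := slem_expand F u v
    have hzt : ∀ t : ℝ, u ⬝ᵥ B *ᵥ u + t * (u ⬝ᵥ B *ᵥ v + v ⬝ᵥ B *ᵥ u)
        + t ^ 2 * (v ⬝ᵥ B *ᵥ v) = 0 → 0 ≤ u ⬝ᵥ F *ᵥ u + t * (u ⬝ᵥ F *ᵥ v + v ⬝ᵥ F *ᵥ u)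
        + t ^ 2 * (v ⬝ᵥ F *ᵥ v) := by
      intro t ht
      rw [← eF]; apply hz; rw [eB]; exact ht
    generalize u ⬝ᵥ B *ᵥ u = a at *
    generalize v ⬝ᵥ B *ᵥ v = b at *
    generalize u ⬝ᵥ B *ᵥ v + v ⬝ᵥ B *ᵥ u = p at *
    generalize u ⬝ᵥ F *ᵥ u = A at *
    generalize v ⬝ᵥ F *ᵥ v = D at *
    generalize u ⬝ᵥ F *ᵥ v + v ⬝ᵥ F *ᵥ u = q at *
    have hab : 0 < -(a * b) := by nlinarith
    have hd : 0 < p ^ 2 - 4 * a * b := by nlinarith [sq_nonneg p]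
    set r := Real.sqrt (p ^ 2 - 4 * a * b)
    have hr : r ^ 2 = p ^ 2 - 4 * a * b := Real.sq_sqrt hd.le
    have hr0 : 0 < r := Real.sqrt_pos.2 hd
    have hpr : |p| < r := by
      apply abs_lt_of_sq_lt_sq _ hr0.le
      linarith
    obtain ⟨hp1, hp2⟩ := abs_lt.1 hpr
    have hb : b ≠ 0 := hv.ne
    -- roots t1 = (-p - r)/(2b) > 0, t2 = (-p + r)/(2b) < 0
    obtain ⟨t1, ht1⟩ : ∃ t1, t1 = (-p - r) / (2 * b) := ⟨_, rfl⟩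
    obtain ⟨t2, ht2⟩ : ∃ t2, t2 = (-p + r) / (2 * b) := ⟨_, rfl⟩
    have p1 : 0 < t1 := by rw [ht1]; apply div_pos_of_neg_of_neg <;> linarith
    have p2 : t2 < 0 := by rw [ht2]; apply div_neg_of_pos_of_neg <;> linarith
    have z1 : a + t1 * p + t1 ^ 2 * b = 0 := by
      rw [ht1]; field_simp; linear_combination hr
    have z2 : a + t2 * p + t2 ^ 2 * b = 0 := by
      rw [ht2]; field_simp; linear_combination hr
    have hprod : t1 * t2 * b = a := by
      rw [ht1, ht2]; field_simp; linear_combination -hr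
    have f1 := hzt t1 z1
    have f2 := hzt t2 z2
    have g : 0 ≤ (t1 - t2) * (A - D * (t1 * t2)) := by
      have := mul_nonneg (neg_pos.2 p2).le f1
      have := mul_nonneg p1.le f2
      nlinarith
    have g2 : 0 ≤ A - D * (t1 * t2) := nonneg_of_mul_nonneg_right g (by linarith)
    rw [← hprod]
    nlinarith [mul_nonneg g2 (neg_pos.2 hv).le]
  let S : Set ℝ := {r | ∃ v : m → ℝ, v ⬝ᵥ B *ᵥ v < 0 ∧ r = (v ⬝ᵥ F *ᵥ v) / (-(v ⬝ᵥ B *ᵥ v))}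
  have hS : S.Nonempty := ⟨_, v0, h0, rfl⟩
  have hS0 : ∀ r ∈ S, 0 ≤ r := by
    rintro r ⟨v, hv, rfl⟩
    exact div_nonneg (h v hv) (by linarith)
  refine ⟨sInf S, Real.sInf_nonneg hS0, fun v => ?_⟩
  rcases lt_trichotomy (v ⬝ᵥ B *ᵥ v) 0 with hv | hv | hv
  · have h1 : sInf S ≤ _ := csInf_le ⟨0, hS0⟩ ⟨v, hv, rfl⟩
    rw [le_div_iff₀ (by linarith)] at h1
    linarith
  · rw [hv, mul_zero, add_zero]; exact hz v hv
  · have h1 : -(v ⬝ᵥ F *ᵥ v) / (v ⬝ᵥ B *ᵥ v) ≤ sInf S := by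
      apply le_csInf hS
      rintro r ⟨w, hw, rfl⟩
      rw [div_le_div_iff₀ hv (by linarith)]
      have := hm v w hv hw
      linarith
    rw [div_le_iff₀ hv] at h1
    linarith

/-- real part of a rank one matrix -/
def rk {m : Type*} (c : m → ℂ) : Matrix m m ℝ :=
  Matrix.of fun i j => (starRingEnd ℂ (c i) * c j).re

lemma rk_quad {m : Type*} [Fintype m] (c : m → ℂ) (v : m → ℝ) :
    v ⬝ᵥ rk c *ᵥ v = Complex.normSq (∑ j, c j * (v j : ℂ)) := by
  have h : ((Complex.normSq (∑ j, c j * (v j : ℂ)) : ℝ) : ℂ) =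
      ∑ i, ∑ j, (v i : ℂ) * ((starRingEnd ℂ (c i) * c j) * (v j : ℂ)) := by
    rw [Complex.normSq_eq_conj_mul_self, map_sum, Finset.sum_mul_sum]
    refine Finset.sum_congr rfl fun i _ => Finset.sum_congr rfl fun j _ => ?_
    rw [map_mul, Complex.conj_ofReal]; ring
  have h2 := congrArg Complex.re h
  rw [Complex.ofReal_re] at h2
  rw [h2, Complex.re_sum]
  simp only [dotProduct, mulVec, Finset.mul_sum, Complex.re_sum]
  refine Finset.sum_congr rfl fun i _ => Finset.sum_congr rfl fun j _ => ?_
  rw [Complex.re_ofReal_mul, Complex.re_mul_ofReal]; rfl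

lemma rk_symm {m : Type*} (c : m → ℂ) : (rk c)ᵀ = rk c := by
  ext i j; simp [rk]; ring

lemma map_psd {m : Type*} [Fintype m] [DecidableEq m] (R : Matrix m m ℝ) (hR : R.PosSemidef) :
    (Matrix.fromBlocks (0 : Matrix Unit Unit ℂ) 0 0 (R.map (fun b => (b : ℂ)))).PosSemidef := by
  obtain ⟨N, hN⟩ : ∃ N : Matrix m m ℝ, R = Nᴴ * N := by
    open scoped MatrixOrder in
    exact CStarAlgebra.nonneg_iff_eq_star_mul_self.mp hR.nonneg
  have : Matrix.fromBlocks (0 : Matrix Unit Unit ℂ) 0 0 (R.map (fun b => (b : ℂ))) =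
      (Matrix.fromBlocks (0 : Matrix Unit Unit ℂ) 0 0 (N.map (fun b => (b : ℂ))))ᴴ *
      (Matrix.fromBlocks (0 : Matrix Unit Unit ℂ) 0 0 (N.map (fun b => (b : ℂ)))) := by
    rw [fromBlocks_conjTranspose, fromBlocks_multiply]
    congr 1 <;> try simp
    rw [hN]
    ext i j
    simp [Matrix.mul_apply]
  rw [this]
  exact posSemidef_conjTranspose_mul_self _

def dvec {n : ℕ} (ZD : Fin n → ℂ) : Fin n ⊕ Unit → ℂ := Sum.elim ZD (fun _ => 1)

lemma A1_apply {n : ℕ} (ZD : Fin n → ℂ) (i j : Fin n ⊕ Unit) :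
    A1mat ZD i j = starRingEnd ℂ (dvec ZD i) * dvec ZD j := by
  rcases i with i | i <;> rcases j with j | j <;> simp [A1mat, dvec]

lemma Bsymm {n : ℕ} (P : Matrix (Fin n) (Fin n) ℝ) (hP : P.PosDef)
    (θhat : Fin n → ℝ) (χ : ℝ) : (Bmat P θhat χ)ᵀ = Bmat P θhat χ := by
  have hs : (P⁻¹)ᵀ = P⁻¹ := by
    have := hP.inv.1
    rwa [Matrix.IsHermitian, conjTranspose_eq_transpose_of_trivial] at this
  rw [Bmat, fromBlocks_transpose, hs]
  have e1 : θhat ᵥ* P⁻¹ = P⁻¹ *ᵥ θhat := by rw [← mulVec_transpose, hs]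
  rw [e1]
  rfl

lemma Bquad {n : ℕ} (P : Matrix (Fin n) (Fin n) ℝ) (hP : P.PosDef)
    (θhat : Fin n → ℝ) (χ : ℝ) (p : Fin n → ℝ) (s : ℝ) :
    (Sum.elim p (fun _ => s) : Fin n ⊕ Unit → ℝ) ⬝ᵥ Bmat P θhat χ *ᵥ (Sum.elim p (fun _ => s))
      = (p - s • θhat) ⬝ᵥ P⁻¹ *ᵥ (p - s • θhat) - s ^ 2 * χ := by
  have hs : (P⁻¹)ᵀ = P⁻¹ := by
    have := hP.inv.1
    rwa [Matrix.IsHermitian, conjTranspose_eq_transpose_of_trivial] at this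
  have e1 : θhat ᵥ* P⁻¹ = P⁻¹ *ᵥ θhat := by rw [← mulVec_transpose, hs]
  have e2 : θhat ⬝ᵥ P⁻¹ *ᵥ p = p ⬝ᵥ P⁻¹ *ᵥ θhat := by
    rw [dotProduct_mulVec, e1, dotProduct_comm]
  have h1 : (Sum.elim p (fun _ => s) : Fin n ⊕ Unit → ℝ) ⬝ᵥ
      Bmat P θhat χ *ᵥ (Sum.elim p (fun _ => s)) =
      p ⬝ᵥ P⁻¹ *ᵥ p - s * (p ⬝ᵥ P⁻¹ *ᵥ θhat) - s * ((P⁻¹ *ᵥ θhat) ⬝ᵥ p)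
        + s ^ 2 * (θhat ⬝ᵥ P⁻¹ *ᵥ θhat - χ) := by
    rw [Bmat, e1, fromBlocks_mulVec]
    simp only [dotProduct, Fintype.sum_sum_type, Sum.elim_inl, Sum.elim_inr, mulVec,
      Pi.add_apply, Matrix.of_apply, Function.comp_apply, Finset.univ_unique,
      Finset.sum_singleton, mul_add, Finset.sum_add_distrib, Finset.mul_sum]
    simp only [neg_mul, mul_neg, Finset.sum_neg_distrib, Finset.sum_mul, Finset.mul_sum]
    have a1 : ∀ q r : Fin n → Fin n → ℝ, (∀ i j, q i j = r i j) →
      ∑ i, ∑ j, q i j = ∑ i, ∑ j, r i j := fun q r h => by simp only [h]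
    rw [a1 (fun i j => p i * (P⁻¹ i j * θhat j * s)) (fun i j => s * (p i * (P⁻¹ i j * θhat j)))
      (fun i j => by ring)]
    ring
  rw [h1, dotProduct_comm (P⁻¹ *ᵥ θhat) p]
  simp only [Matrix.mulVec_sub, Matrix.mulVec_smul, sub_dotProduct, dotProduct_sub,
    smul_dotProduct, dotProduct_smul, smul_eq_mul, e2]
  ring

/-- the skew matrix -/
noncomputable def Xof {m : Type*} (d l : m → ℂ) (α : ℝ) : Matrix m m ℝ :=
  Matrix.of fun i j =>
    (starRingEnd ℂ (d i) * d j).im - (starRingEnd ℂ (l i) * l j).im / α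

lemma Xof_skew {m : Type*} (d l : m → ℂ) (α : ℝ) : (Xof d l α)ᵀ = -Xof d l α := by
  ext i j; simp [Xof]; ring

lemma big_psd {n : ℕ} (e : ℂ) (ZN ZD : Fin n → ℂ)
    (P : Matrix (Fin n) (Fin n) ℝ) (θhat : Fin n → ℝ) (χ x : ℝ) (y : ℂ) (z ξ : ℝ)
    (α : ℝ) (hα : α = Complex.normSq y / x ^ 2 - z / x) (hα0 : 0 ≤ α)
    (hl : α = 0 → lamVec e ZN ZD x y = 0)
    (hR : (rk (dvec ZD) - α⁻¹ • rk (lamVec e ZN ZD x y) + ξ • Bmat P θhat χ).PosSemidef) :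
    (-(bigMat e ZN ZD P θhat χ x y z ξ (Xof (dvec ZD) (lamVec e ZN ZD x y) α))).PosSemidef := by
  set l := lamVec e ZN ZD x y with hlam
  let k : Unit ⊕ (Fin n ⊕ Unit) → ℂ :=
    Sum.elim (fun _ => ((Real.sqrt α : ℝ) : ℂ))
      (fun i => -(starRingEnd ℂ (l i)) * ((Real.sqrt α : ℝ) : ℂ)⁻¹)
  have hsq : ((Real.sqrt α : ℝ) : ℂ) * ((Real.sqrt α : ℝ) : ℂ) = (α : ℂ) := by
    rw [← Complex.ofReal_mul, Real.mul_self_sqrt hα0]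
  have key : -(bigMat e ZN ZD P θhat χ x y z ξ (Xof (dvec ZD) l α)) =
      vecMulVec k (star k) + Matrix.fromBlocks (0 : Matrix Unit Unit ℂ) 0 0
        ((rk (dvec ZD) - α⁻¹ • rk l + ξ • Bmat P θhat χ).map (fun b => (b : ℂ))) := by
    have hcan : ∀ i, l i = ((Real.sqrt α : ℝ) : ℂ) * (l i * ((Real.sqrt α : ℝ) : ℂ)⁻¹) := by
      intro i
      rcases hα0.eq_or_lt with h | h
      · rw [hl h.symm]; simp
      · have : ((Real.sqrt α : ℝ) : ℂ) ≠ 0 := by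
          exact_mod_cast (Real.sqrt_pos.2 h).ne'
        field_simp
    ext i j
    rcases i with i | i <;> rcases j with j | j
    · simp only [bigMat, Matrix.neg_apply, fromBlocks_apply₁₁, Matrix.of_apply, ← hα,
        Matrix.add_apply, vecMulVec_apply, k, Pi.star_apply, Sum.elim_inl, Matrix.zero_apply]
      rw [← hsq]; simp
    · simp only [bigMat, Matrix.neg_apply, fromBlocks_apply₁₂, Matrix.of_apply,
        Matrix.add_apply, vecMulVec_apply, k, Pi.star_apply, Sum.elim_inl, Sum.elim_inr,
        Matrix.zero_apply, ← hlam]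
      have h1 : ((Real.sqrt α : ℝ) : ℂ) *
          star (-(starRingEnd ℂ (l j)) * ((Real.sqrt α : ℝ) : ℂ)⁻¹) =
          -(((Real.sqrt α : ℝ) : ℂ) * (l j * ((Real.sqrt α : ℝ) : ℂ)⁻¹)) := by
        simp
      rw [h1, ← hcan, add_zero]
    · simp only [bigMat, Matrix.neg_apply, fromBlocks_apply₂₁, Matrix.of_apply,
        Matrix.add_apply, vecMulVec_apply, k, Pi.star_apply, Sum.elim_inl, Sum.elim_inr,
        Matrix.zero_apply, ← hlam]
      have h1 : -(starRingEnd ℂ (l i)) * ((Real.sqrt α : ℝ) : ℂ)⁻¹ *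
          star ((Real.sqrt α : ℝ) : ℂ) =
          -(starRingEnd ℂ (((Real.sqrt α : ℝ) : ℂ) * (l i * ((Real.sqrt α : ℝ) : ℂ)⁻¹))) := by
        simp; ring
      rw [h1, ← hcan, add_zero]
    · simp only [bigMat, Matrix.neg_apply, fromBlocks_apply₂₂, Matrix.of_apply,
        Matrix.add_apply, Matrix.sub_apply, vecMulVec_apply, k, Pi.star_apply, Sum.elim_inr,
        Matrix.smul_apply, Matrix.map_apply, A1_apply, smul_eq_mul, rk, Xof]
      have h1 : -(starRingEnd ℂ (l i)) * ((Real.sqrt α : ℝ) : ℂ)⁻¹ *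
          star (-(starRingEnd ℂ (l j)) * ((Real.sqrt α : ℝ) : ℂ)⁻¹) =
          (starRingEnd ℂ (l i) * l j) * (α : ℂ)⁻¹ := by
        rw [← hsq, mul_inv]; simp; ring
      rw [h1]
      generalize starRingEnd ℂ (l i) * l j = w
      generalize starRingEnd ℂ (dvec ZD i) * dvec ZD j = u
      rw [← Complex.ofReal_inv]
      apply Complex.ext <;> simp
      all_goals ring
  rw [key]
  exact (posSemidef_vecMulVec_self_star k).add (map_psd _ hR)

lemma big_quad {n : ℕ} (e : ℂ) (ZN ZD : Fin n → ℂ)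
    (P : Matrix (Fin n) (Fin n) ℝ) (θhat : Fin n → ℝ) (χ x : ℝ) (y : ℂ) (z ξ : ℝ)
    (X : Matrix (Fin n ⊕ Unit) (Fin n ⊕ Unit) ℝ)
    (h : (-(bigMat e ZN ZD P θhat χ x y z ξ X)).PosSemidef) (c : ℂ) (v : Fin n ⊕ Unit → ℝ) :
    0 ≤ (Complex.normSq y / x ^ 2 - z / x) * Complex.normSq c
      - 2 * (starRingEnd ℂ c * ∑ j, lamVec e ZN ZD x y j * (v j : ℂ)).re
      + Complex.normSq (∑ j, dvec ZD j * (v j : ℂ)) + ξ * (v ⬝ᵥ Bmat P θhat χ *ᵥ v) := by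
  have h1 := h.re_dotProduct_nonneg (Sum.elim (fun _ => c) (fun i => (v i : ℂ)))
  refine h1.trans_eq ?_
  rw [← rk_quad]
  rw [bigMat]
  generalize Complex.normSq y / x ^ 2 - z / x = α
  generalize lamVec e ZN ZD x y = l
  rw [dotProduct, Fintype.sum_sum_type]
  simp only [mulVec, dotProduct, Fintype.sum_sum_type (α₁ := Unit), Matrix.neg_apply,
    fromBlocks_apply₁₁, fromBlocks_apply₁₂, fromBlocks_apply₂₁, fromBlocks_apply₂₂,
    Pi.star_apply, Sum.elim_inl, Sum.elim_inr, Matrix.of_apply, Finset.univ_unique,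
    Finset.sum_singleton]
  have t1 : ∀ i, star ((v i : ℝ) : ℂ) = ((v i : ℝ) : ℂ) := fun i => Complex.conj_ofReal _
  have t2 : ∑ j, -l j * (v j : ℂ) = -∑ j, l j * (v j : ℂ) := by
    rw [← Finset.sum_neg_distrib]; exact Finset.sum_congr rfl fun _ _ => by ring
  have t3 : ∑ i, (v i : ℂ) * (-(starRingEnd ℂ (l i)) * c) =
      -(starRingEnd ℂ (∑ j, l j * (v j : ℂ)) * c) := by
    rw [map_sum, Finset.sum_mul, ← Finset.sum_neg_distrib]
    refine Finset.sum_congr rfl fun i _ => ?_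
    rw [map_mul, Complex.conj_ofReal]; ring
  simp only [t1, t2, mul_add, Finset.sum_add_distrib, t3]
  generalize ∑ j, l j * (v j : ℂ) = L
  simp only [Finset.mul_sum, Matrix.add_apply, Matrix.sub_apply, Matrix.neg_apply,
    Matrix.smul_apply, Matrix.map_apply, A1_apply, smul_eq_mul]
  have t4 : (∑ i, ∑ j, (v i : ℂ) * (-(-(starRingEnd ℂ (dvec ZD i) * dvec ZD j) -
      (ξ : ℂ) * (Bmat P θhat χ i j : ℂ) + Complex.I * (X i j : ℂ)) * (v j : ℂ))).re =
      ∑ i, ∑ j, v i * (rk (dvec ZD) i j * v j) + ∑ i, ∑ j, ξ * (v i * (Bmat P θhat χ i j * v j)) := by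
    simp only [Complex.re_sum, ← Finset.sum_add_distrib]
    refine Finset.sum_congr rfl fun i _ => Finset.sum_congr rfl fun j _ => ?_
    rw [Complex.re_ofReal_mul, Complex.re_mul_ofReal]
    simp [rk]
    ring
  simp only [RCLike.re_to_complex, Complex.add_re]
  rw [t4]
  generalize ∑ i, ∑ j, v i * (rk (dvec ZD) i j * v j) = S1
  generalize ∑ i, ∑ j, ξ * (v i * (Bmat P θhat χ i j * v j)) = S2
  simp [Complex.normSq_apply]
  ring

lemma diss_iff (x : ℝ) (hx : 0 < x) (y : ℂ) (z : ℝ) (a d : ℂ) (hd : d ≠ 0) :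
    Dissipative x y z (a / d) ↔ Complex.normSq (a + y / (x : ℂ) * d) ≤
      (Complex.normSq y / x ^ 2 - z / x) * Complex.normSq d := by
  obtain ⟨T, rfl⟩ : ∃ T, a = T * d := ⟨a / d, by field_simp⟩
  rw [mul_div_cancel_right₀ _ hd, ← add_mul, Complex.normSq_mul,
    mul_le_mul_iff_left₀ (Complex.normSq_pos.2 hd), Dissipative]
  have h1 : x * (Complex.normSq (T + y / (x : ℂ)) - (Complex.normSq y / x ^ 2 - z / x)) =
      x * Complex.normSq T + 2 * (starRingEnd ℂ y * T).re + z := by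
    rw [Complex.normSq_add, Complex.normSq_div, Complex.normSq_ofReal]
    have : (T * (starRingEnd ℂ) (y / (x : ℂ))).re = (starRingEnd ℂ y * T).re / x := by
      rw [map_div₀, Complex.conj_ofReal, ← mul_div_assoc, Complex.div_ofReal_re, mul_comm]
    rw [this]
    field_simp
    ring
  rw [← h1, mul_nonpos_iff_pos_imp_nonpos]
  constructor
  · intro h; have := h.1 hx; linarith
  · intro h; exact ⟨fun _ => by linarith, fun _ => hx.le⟩

lemma lam_sum {n : ℕ} (e : ℂ) (ZN ZD : Fin n → ℂ) (x : ℝ) (y : ℂ) (θ : Fin n → ℝ) :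
    ∑ j, lamVec e ZN ZD x y j *
      (((Sum.elim θ (fun _ => 1) : Fin n ⊕ Unit → ℝ) j : ℝ) : ℂ) =
      (e + ∑ i, ZN i * (θ i : ℂ)) + y / (x : ℂ) * (1 + ∑ i, ZD i * (θ i : ℂ)) := by
  simp only [lamVec, Fintype.sum_sum_type, Sum.elim_inl, Sum.elim_inr, Finset.univ_unique,
    Finset.sum_singleton, add_mul, Finset.sum_add_distrib, mul_assoc, ← Finset.mul_sum]
  push_cast
  ring

lemma d_sum {n : ℕ} (ZD : Fin n → ℂ) (θ : Fin n → ℝ) :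
    ∑ j, dvec ZD j * (((Sum.elim θ (fun _ => 1) : Fin n ⊕ Unit → ℝ) j : ℝ) : ℂ) =
      1 + ∑ i, ZD i * (θ i : ℂ) := by
  simp [dvec, Fintype.sum_sum_type, add_comm]

/-- For `x > 0`, `T(θ)` is `{x,y,z}`-dissipative for every `θ` in the ellipsoid `U` iff
there exist `ξ ≥ 0` and a real skew-symmetric matrix `𝒳` such that the Hermitian matrix
`[[−α, λ],[λ*, −A₁ − ξB + i𝒳]]` is negative semidefinite, with
`λ = [Z_N + (y/x)Z_D , e + y/x]` and `α = |y|²/x² − z/x`. -/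
theorem dissipativity_iff_LMI {n : ℕ} (e : ℂ) (ZN ZD : Fin n → ℂ)
    (P : Matrix (Fin n) (Fin n) ℝ) (hP : P.PosDef)
    (θhat : Fin n → ℝ) (χ : ℝ) (hχ : 0 < χ)
    (hden : ∀ θ ∈ ellipsoid P θhat χ, (1 : ℂ) + ∑ i, ZD i * (θ i : ℂ) ≠ 0)
    (x : ℝ) (hx : 0 < x) (y : ℂ) (z : ℝ) :
    (∀ θ ∈ ellipsoid P θhat χ, Dissipative x y z (Tval e ZN ZD θ)) ↔
      ∃ ξ : ℝ, 0 ≤ ξ ∧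
        ∃ X : Matrix (Fin n ⊕ Unit) (Fin n ⊕ Unit) ℝ, Xᵀ = -X ∧
          (-(bigMat e ZN ZD P θhat χ x y z ξ X)).PosSemidef := by
  obtain ⟨α, hα⟩ : ∃ α : ℝ, α = Complex.normSq y / x ^ 2 - z / x := ⟨_, rfl⟩
  have hU : ∀ θ : Fin n → ℝ, θ ∈ ellipsoid P θhat χ ↔
      (Sum.elim θ (fun _ => 1) : Fin n ⊕ Unit → ℝ) ⬝ᵥ
        Bmat P θhat χ *ᵥ (Sum.elim θ (fun _ => 1)) < 0 := by
    intro θ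
    rw [Bquad P hP, ellipsoid, Set.mem_ofPred_eq]
    simp
  have hD : ∀ θ ∈ ellipsoid P θhat χ, (Dissipative x y z (Tval e ZN ZD θ) ↔
      Complex.normSq (∑ j, lamVec e ZN ZD x y j *
        (((Sum.elim θ (fun _ => 1) : Fin n ⊕ Unit → ℝ) j : ℝ) : ℂ)) ≤
      α * Complex.normSq (∑ j, dvec ZD j *
        (((Sum.elim θ (fun _ => 1) : Fin n ⊕ Unit → ℝ) j : ℝ) : ℂ))) := by
    intro θ hθ
    rw [Tval, diss_iff x hx y z _ _ (hden θ hθ), lam_sum, d_sum, hα]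
  have hhat : θhat ∈ ellipsoid P θhat χ := by simp [ellipsoid, hχ]
  constructor
  · intro h
    have hall : ∀ v : Fin n ⊕ Unit → ℝ, v ⬝ᵥ Bmat P θhat χ *ᵥ v < 0 →
        Complex.normSq (∑ j, lamVec e ZN ZD x y j * (v j : ℂ)) ≤
          α * Complex.normSq (∑ j, dvec ZD j * (v j : ℂ)) := by
      intro v hv
      obtain ⟨p, s, rfl⟩ : ∃ (p : Fin n → ℝ) (s : ℝ), v = Sum.elim p (fun _ => s) :=
        ⟨fun i => v (Sum.inl i), v (Sum.inr ()), by ext i; rcases i with i | i <;> rfl⟩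
      have hs : s ≠ 0 := by
        rintro rfl
        rw [Bquad P hP] at hv
        have := hP.inv.posSemidef.dotProduct_mulVec_nonneg p
        simp at hv this
        linarith
      obtain ⟨θ, rfl⟩ : ∃ θ : Fin n → ℝ, p = s • θ := ⟨s⁻¹ • p, by rw [smul_inv_smul₀ hs]⟩
      have hsm : (Sum.elim (s • θ) (fun _ => s) : Fin n ⊕ Unit → ℝ) =
          s • Sum.elim θ (fun _ => 1) := by
        ext i; rcases i with i | i <;> simp
      rw [hsm] at hv ⊢
      have hmem : θ ∈ ellipsoid P θhat χ := by
        rw [hU]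
        rw [mulVec_smul, smul_dotProduct, dotProduct_smul, smul_eq_mul, smul_eq_mul,
          ← mul_assoc] at hv
        exact (pos_iff_neg_of_mul_neg hv).1 (mul_self_pos.2 hs)
      have h2 := (hD θ hmem).1 (h θ hmem)
      have hlin : ∀ c : Fin n ⊕ Unit → ℂ, ∑ j, c j *
          (((s • Sum.elim θ (fun _ => 1) : Fin n ⊕ Unit → ℝ) j : ℝ) : ℂ) = (s : ℂ) *
          ∑ j, c j * (((Sum.elim θ (fun _ => 1) : Fin n ⊕ Unit → ℝ) j : ℝ) : ℂ) := by
        intro c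
        rw [Finset.mul_sum]
        refine Finset.sum_congr rfl fun j _ => ?_
        rw [Pi.smul_apply, smul_eq_mul, Complex.ofReal_mul]; ring
      rw [hlin, hlin, Complex.normSq_mul, Complex.normSq_mul, mul_left_comm]
      exact mul_le_mul_of_nonneg_left h2 (Complex.normSq_nonneg _)
    have hv0 := (hU θhat).1 hhat
    have hα0 : 0 ≤ α := by
      have h1 := hall _ hv0
      rw [d_sum] at h1
      have h2 := Complex.normSq_pos.2 (hden θhat hhat)
      exact nonneg_of_mul_nonneg_left ((Complex.normSq_nonneg _).trans h1) h2
    have hl : α = 0 → lamVec e ZN ZD x y = 0 := by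
      intro h0
      obtain ⟨ξ, hξ, h1⟩ := slem (-rk (lamVec e ZN ZD x y)) (Bmat P θhat χ) _ hv0 (by
        intro v hv
        have := hall v hv
        rw [neg_mulVec, dotProduct_neg, rk_quad]
        rw [h0, zero_mul] at this
        linarith)
      have hξ0 : ξ = 0 := by
        have h2 := h1 (Sum.elim θhat (fun _ => 1))
        rw [neg_mulVec, dotProduct_neg, rk_quad] at h2
        have h3 := Complex.normSq_nonneg (∑ j, lamVec e ZN ZD x y j *
          (((Sum.elim θhat (fun _ => 1) : Fin n ⊕ Unit → ℝ) j : ℝ) : ℂ))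
        by_contra hne
        have := mul_neg_of_pos_of_neg (lt_of_le_of_ne hξ (Ne.symm hne)) hv0
        linarith
      ext i
      have h2 := h1 (Pi.single i 1)
      rw [hξ0, zero_mul, add_zero, neg_mulVec, dotProduct_neg, rk_quad] at h2
      have h3 := Complex.normSq_eq_zero.1 (le_antisymm (by linarith) (Complex.normSq_nonneg _))
      rw [Finset.sum_eq_single i (fun j _ hj => by simp [hj]) (by simp)] at h3
      simpa using h3
    obtain ⟨ξ, hξ, h1⟩ := slem (rk (dvec ZD) - α⁻¹ • rk (lamVec e ZN ZD x y))
      (Bmat P θhat χ) _ hv0 (by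
        intro v hv
        have h2 := hall v hv
        rw [sub_mulVec, smul_mulVec, dotProduct_sub, dotProduct_smul, rk_quad, rk_quad,
          smul_eq_mul, sub_nonneg]
        rcases hα0.eq_or_lt with h0 | h0
        · rw [← h0]; simp [Complex.normSq_nonneg]
        · rwa [inv_mul_le_iff₀ h0])
    refine ⟨ξ, hξ, Xof (dvec ZD) (lamVec e ZN ZD x y) α, Xof_skew _ _ _, ?_⟩
    refine big_psd e ZN ZD P θhat χ x y z ξ α hα hα0 hl ?_
    refine .of_dotProduct_mulVec_nonneg ?_ ?_
    · rw [Matrix.IsHermitian, conjTranspose_eq_transpose_of_trivial, transpose_add,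
        transpose_sub, transpose_smul, transpose_smul, rk_symm, rk_symm, Bsymm P hP]
    · intro v
      have := h1 v
      rwa [star_trivial, add_mulVec, dotProduct_add, smul_mulVec, dotProduct_smul, smul_eq_mul]
  · rintro ⟨ξ, hξ, X, -, hX⟩ θ hθ
    rw [hD θ hθ]
    have hb := (hU θ).1 hθ
    have hq := big_quad e ZN ZD P θhat χ x y z ξ X hX
    rw [← hα] at hq
    have hα0 : 0 ≤ α := by
      have := hq 1 0
      simpa using this
    have hq2 := fun c => hq c (Sum.elim θ (fun _ => 1))
    have hξb := mul_nonpos_of_nonneg_of_nonpos hξ hb.le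
    generalize (Sum.elim θ (fun _ => 1) : Fin n ⊕ Unit → ℝ) ⬝ᵥ
        Bmat P θhat χ *ᵥ (Sum.elim θ (fun _ => 1)) = b at *
    generalize ∑ j, lamVec e ZN ZD x y j *
        (((Sum.elim θ (fun _ => 1) : Fin n ⊕ Unit → ℝ) j : ℝ) : ℂ) = L at *
    generalize ∑ j, dvec ZD j *
        (((Sum.elim θ (fun _ => 1) : Fin n ⊕ Unit → ℝ) j : ℝ) : ℂ) = D at *
    have hdis := discrim_le_zero (a := α * Complex.normSq L) (b := -2 * Complex.normSq L)
      (c := Complex.normSq D) (by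
        intro t
        have h1 := hq2 ((t : ℂ) * L)
        have h2 : (starRingEnd ℂ ((t : ℂ) * L) * L).re = t * Complex.normSq L := by
          rw [map_mul, Complex.conj_ofReal, mul_assoc, ← Complex.normSq_eq_conj_mul_self,
            ← Complex.ofReal_mul, Complex.ofReal_re]
        rw [h2, Complex.normSq_mul, Complex.normSq_ofReal] at h1
        linarith)
    rw [discrim] at hdis
    rcases (Complex.normSq_nonneg L).eq_or_lt with h0 | h0
    · rw [← h0]; exact mul_nonneg hα0 (Complex.normSq_nonneg _)
    · by_contra hcon
      push Not at hcon
      nlinarith [mul_pos h0 (sub_pos.2 hcon)]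
end

section
/- (Disc embedding) Let c ∈ ℂ and ρ > 0. The disc-embedding constraint |T(θ) − c| ≤ ρ holds for every θ in the ellipsoid U if and only if there exist a real scalar ξ ≥ 0 and a real skew-symmetric matrix 𝒳 ∈ ℝ^{(n+1)×(n+1)} such that the Hermitian (n+2)×(n+2) complex matrix [[−ρ², λ],[λ*, −A₁ − ξB + i𝒳]] is negative semidefinite, where λ = [Z_N − c·Z_D , e − c] ∈ ℂ^{1×(n+1)}. (This is the instance of the dissipativity characterization with x = 1, y = −c, z = |c|² − ρ².) -/
open Matrix
open scoped ComplexOrder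

/-- The row vector `λ = [Z_N − c·Z_D , e − c] ∈ ℂ^{1×(n+1)}`. -/
def lamDisc {n : ℕ} (e : ℂ) (ZN ZD : Fin n → ℂ) (c : ℂ) : Fin n ⊕ Unit → ℂ :=
  Sum.elim (fun i => ZN i - c * ZD i) (fun _ => e - c)

/-- The Hermitian `(n+2)×(n+2)` matrix `[[−ρ², λ],[λ*, −A₁ − ξB + i𝒳]]` of the disc
embedding LMI. -/
noncomputable def discMat {n : ℕ} (e : ℂ) (ZN ZD : Fin n → ℂ)
    (P : Matrix (Fin n) (Fin n) ℝ) (θhat : Fin n → ℝ) (χ : ℝ)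
    (c : ℂ) (ρ : ℝ) (ξ : ℝ) (X : Matrix (Fin n ⊕ Unit) (Fin n ⊕ Unit) ℝ) :
    Matrix (Unit ⊕ (Fin n ⊕ Unit)) (Unit ⊕ (Fin n ⊕ Unit)) ℂ :=
  Matrix.fromBlocks
    (Matrix.of fun _ _ => -((ρ ^ 2 : ℝ) : ℂ))
    (Matrix.of fun _ j => lamDisc e ZN ZD c j)
    (Matrix.of fun i _ => starRingEnd ℂ (lamDisc e ZN ZD c i))
    (-(A1mat ZD) - (ξ : ℂ) • (Bmat P θhat χ).map (fun b => (b : ℂ)) +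
      Complex.I • X.map (fun b => (b : ℂ)))


lemma slemma_aux {V : Type*} [AddCommGroup V] [Module ℝ V] (f g : V → ℝ)
    (hf : ∀ x y, ∃ k, ∀ t : ℝ, f (x + t • y) = f x + 2 * t * k + t ^ 2 * f y)
    (hg : ∀ x y, ∃ k, ∀ t : ℝ, g (x + t • y) = g x + 2 * t * k + t ^ 2 * g y)
    (s : V) (hs : g s < 0) (h : ∀ x, g x < 0 → 0 ≤ f x) (x : V) (hx : g x = 0) : 0 ≤ f x := by
  obtain ⟨k, hk⟩ := hf x s
  obtain ⟨l, hl⟩ := hg x s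
  have key : ∃ σ : ℝ, ∀ t : ℝ, 0 < t → 0 ≤ f x + t * (2 * σ * k) + t ^ 2 * (σ ^ 2 * f s) := by
    by_cases hl0 : 0 ≤ l
    · refine ⟨-1, fun t ht => ?_⟩
      have h1 := h (x + (-t) • s) (by
        rw [hl, hx]; nlinarith [mul_nonneg ht.le hl0, mul_pos ht ht])
      rw [hk] at h1; linarith
    · refine ⟨1, fun t ht => ?_⟩
      have h1 := h (x + t • s) (by
        rw [hl, hx]; nlinarith [mul_pos ht (not_le.mp hl0 |> neg_pos.mpr), mul_pos ht ht])
      rw [hk] at h1; linarith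
  obtain ⟨σ, hσ⟩ := key
  have hc : Filter.Tendsto (fun t : ℝ => f x + t * (2 * σ * k) + t ^ 2 * (σ ^ 2 * f s))
      (nhdsWithin 0 (Set.Ioi 0)) (nhds (f x)) := by
    have : Continuous (fun t : ℝ => f x + t * (2 * σ * k) + t ^ 2 * (σ ^ 2 * f s)) := by fun_prop
    have h2 := this.tendsto 0
    simp only [zero_mul, add_zero, ne_eq, OfNat.ofNat_ne_zero, not_false_eq_true, zero_pow] at h2
    exact h2.mono_left nhdsWithin_le_nhds
  exact ge_of_tendsto hc (by filter_upwards [self_mem_nhdsWithin] with t ht using hσ t ht)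

lemma slemma_abs {V : Type*} [AddCommGroup V] [Module ℝ V] (f g : V → ℝ)
    (hf : ∀ x y, ∃ k, ∀ t : ℝ, f (x + t • y) = f x + 2 * t * k + t ^ 2 * f y)
    (hg : ∀ x y, ∃ k, ∀ t : ℝ, g (x + t • y) = g x + 2 * t * k + t ^ 2 * g y)
    (s : V) (hs : g s < 0) (h : ∀ x, g x < 0 → 0 ≤ f x) :
    ∃ ξ : ℝ, 0 ≤ ξ ∧ ∀ x, 0 ≤ f x + ξ * g x := by
  have h0 := slemma_aux f g hf hg s hs h
  have main : ∀ x y, g x < 0 → 0 < g y → 0 ≤ f y * (- g x) + f x * g y := by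
    intro x y hx hy
    obtain ⟨k, hk⟩ := hf x y
    obtain ⟨l, hl⟩ := hg x y
    have hD : 0 < l ^ 2 - g x * g y := by nlinarith [sq_nonneg l, mul_pos (neg_pos.mpr hx) hy]
    set r := Real.sqrt (l ^ 2 - g x * g y) with hr
    have hr2 : r ^ 2 = l ^ 2 - g x * g y := Real.sq_sqrt hD.le
    have hrp : 0 < r := Real.sqrt_pos.mpr hD
    have hlr : l < r ∧ -r < l := by
      constructor <;> nlinarith [mul_pos (neg_pos.mpr hx) hy]
    have root : ∀ q : ℝ, q ^ 2 = r ^ 2 → 0 ≤ f x + 2 * ((-l + q) / g y) * k + ((-l + q) / g y) ^ 2 * f y := by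
      intro q hq
      rw [← hk]
      apply h0
      rw [hl]
      field_simp
      nlinarith
    have e1 := root r rfl
    have e2 := root (-r) (by ring)
    have w1 := mul_nonneg (by linarith [hlr.2] : 0 ≤ l + r) e1
    have w2 := mul_nonneg (by linarith [hlr.1] : 0 ≤ r - l) e2
    have e3 : (l + r) * (f x + 2 * ((-l + r) / g y) * k + ((-l + r) / g y) ^ 2 * f y) +
      (r - l) * (f x + 2 * ((-l + -r) / g y) * k + ((-l + -r) / g y) ^ 2 * f y)
      = 2 * r / g y * (f x * g y + f y * ((r ^ 2 - l ^ 2) / g y)) := by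
      field_simp
      ring
    have e4 : (r ^ 2 - l ^ 2) / g y = - g x := by rw [hr2]; field_simp; ring
    rw [e4] at e3
    have : 0 ≤ 2 * r / g y * (f x * g y + f y * (- g x)) := by linarith
    have := nonneg_of_mul_nonneg_right this (by positivity)
    linarith
  let S : Set ℝ := insert 0 {a | ∃ y, 0 < g y ∧ a = - f y / g y}
  have hub : ∀ x, g x < 0 → ∀ a ∈ S, a ≤ f x / (- g x) := by
    intro x hx a ha
    have hx' := neg_pos.mpr hx
    rcases ha with rfl | ⟨y, hy, rfl⟩
    · exact div_nonneg (h x hx) hx'.le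
    · rw [div_le_div_iff₀ hy hx']
      linarith [main x y hx hy]
  have hbdd : BddAbove S := ⟨_, hub s hs⟩
  have hne : S.Nonempty := ⟨0, Set.mem_insert _ _⟩
  refine ⟨sSup S, le_csSup hbdd (Set.mem_insert _ _), fun x => ?_⟩
  rcases lt_trichotomy (g x) 0 with hx | hx | hx
  · have := csSup_le hne (hub x hx)
    rw [le_div_iff₀ (neg_pos.mpr hx)] at this
    linarith
  · rw [hx]; simpa using h0 x hx
  · have := le_csSup hbdd (Set.mem_insert_of_mem 0 ⟨x, hx, rfl⟩)
    rw [div_le_iff₀ hx] at this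
    linarith

lemma quad_expand {m : Type*} [Fintype m] (Q : Matrix m m ℝ) (x y : m → ℝ) :
    ∃ k, ∀ t : ℝ, (x + t • y) ⬝ᵥ Q *ᵥ (x + t • y) =
      x ⬝ᵥ Q *ᵥ x + 2 * t * k + t ^ 2 * (y ⬝ᵥ Q *ᵥ y) := by
  refine ⟨(x ⬝ᵥ Q *ᵥ y + y ⬝ᵥ Q *ᵥ x) / 2, fun t => ?_⟩
  simp only [mulVec_add, mulVec_smul, dotProduct_add, add_dotProduct, smul_dotProduct,
    dotProduct_smul, smul_eq_mul]
  ring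

/-- Schur complement core -/
noncomputable def Mcore {n : ℕ} (e : ℂ) (ZN ZD : Fin n → ℂ) (c : ℂ) (ρ : ℝ) :
    Matrix (Fin n ⊕ Unit) (Fin n ⊕ Unit) ℂ :=
  fun i j => star (dvec ZD i) * dvec ZD j -
    star (lamDisc e ZN ZD c i) * lamDisc e ZN ZD c j / (ρ : ℂ) ^ 2

noncomputable def uvec {n : ℕ} (e : ℂ) (ZN ZD : Fin n → ℂ) (c : ℂ) (ρ : ℝ) :
    Unit ⊕ (Fin n ⊕ Unit) → ℂ :=
  Sum.elim (fun _ => (ρ : ℂ)) (fun j => - lamDisc e ZN ZD c j / (ρ : ℂ))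

noncomputable def Gmat {n : ℕ} (e : ℂ) (ZN ZD : Fin n → ℂ)
    (P : Matrix (Fin n) (Fin n) ℝ) (θhat : Fin n → ℝ) (χ : ℝ)
    (c : ℂ) (ρ : ℝ) (ξ : ℝ) (X : Matrix (Fin n ⊕ Unit) (Fin n ⊕ Unit) ℝ) :
    Matrix (Fin n ⊕ Unit) (Fin n ⊕ Unit) ℂ :=
  fun i j => Mcore e ZN ZD c ρ i j + ξ * (Bmat P θhat χ i j : ℂ) - Complex.I * (X i j : ℂ)

lemma A1mat_apply {n : ℕ} (ZD : Fin n → ℂ) (i j) :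
    A1mat ZD i j = star (dvec ZD i) * dvec ZD j := by
  rcases i with i | i <;> rcases j with j | j <;> simp [A1mat, dvec]

lemma disc_decomp {n : ℕ} (e : ℂ) (ZN ZD : Fin n → ℂ)
    (P : Matrix (Fin n) (Fin n) ℝ) (θhat : Fin n → ℝ) (χ : ℝ)
    (c : ℂ) (ρ : ℝ) (hρ : 0 < ρ) (ξ : ℝ) (X : Matrix (Fin n ⊕ Unit) (Fin n ⊕ Unit) ℝ) :
    -(discMat e ZN ZD P θhat χ c ρ ξ X) =
      vecMulVec (star (uvec e ZN ZD c ρ)) (uvec e ZN ZD c ρ) +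
      fromBlocks 0 0 0 (Gmat e ZN ZD P θhat χ c ρ ξ X) := by
  have hρ' : (ρ : ℂ) ≠ 0 := by exact_mod_cast hρ.ne'
  ext i j
  rcases i with i | i <;> rcases j with j | j
  · simp [discMat, vecMulVec_apply, uvec]; ring
  · simp [discMat, vecMulVec_apply, uvec]; field_simp
  · simp [discMat, vecMulVec_apply, uvec]; field_simp
  · simp [discMat, vecMulVec_apply, uvec, Gmat, Mcore, A1mat_apply]; field_simp; ring

lemma Qform {n : ℕ} (e : ℂ) (ZN ZD : Fin n → ℂ) (c : ℂ) (ρ : ℝ) (x : Fin n ⊕ Unit → ℝ) :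
    x ⬝ᵥ (Mcore e ZN ZD c ρ).map Complex.re *ᵥ x =
      ‖∑ i, dvec ZD i * (x i : ℂ)‖ ^ 2 - ‖∑ i, lamDisc e ZN ZD c i * (x i : ℂ)‖ ^ 2 / ρ ^ 2 := by
  have h1 : ∀ v : Fin n ⊕ Unit → ℂ, ((‖∑ i, v i * (x i : ℂ)‖ ^ 2 : ℝ) : ℂ) =
      ∑ i, ∑ j, (x i : ℂ) * (star (v i) * v j * x j) := by
    intro v
    push_cast
    rw [← Complex.conj_mul', map_sum, Finset.sum_mul_sum]
    refine Finset.sum_congr rfl fun i _ => Finset.sum_congr rfl fun j _ => ?_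
    simp; ring
  have h2 : (((‖∑ i, dvec ZD i * (x i : ℂ)‖ ^ 2 -
      ‖∑ i, lamDisc e ZN ZD c i * (x i : ℂ)‖ ^ 2 / ρ ^ 2 : ℝ)) : ℂ) =
      ∑ i, ∑ j, (x i : ℂ) * (Mcore e ZN ZD c ρ i j * x j) := by
    rw [Complex.ofReal_sub, Complex.ofReal_div, h1, h1, Finset.sum_div, ← Finset.sum_sub_distrib]
    refine Finset.sum_congr rfl fun i _ => ?_
    rw [Finset.sum_div, ← Finset.sum_sub_distrib]
    refine Finset.sum_congr rfl fun j _ => ?_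
    simp only [Mcore]; push_cast; ring
  rw [← Complex.ofReal_re (‖∑ i, dvec ZD i * (x i : ℂ)‖ ^ 2 - _), h2]
  simp only [dotProduct, mulVec, Finset.mul_sum, Complex.re_sum]
  refine Finset.sum_congr rfl fun i _ => Finset.sum_congr rfl fun j _ => ?_
  simp

lemma Mcore_herm {n : ℕ} (e : ℂ) (ZN ZD : Fin n → ℂ) (c : ℂ) (ρ : ℝ) (i j) :
    star (Mcore e ZN ZD c ρ i j) = Mcore e ZN ZD c ρ j i := by
  simp [Mcore]; ring

lemma Pinv_symm {n : ℕ} {P : Matrix (Fin n) (Fin n) ℝ} (hP : P.PosDef) (i j) :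
    P⁻¹ i j = P⁻¹ j i := by
  have := hP.inv.isHermitian.apply i j
  simpa using this.symm

lemma Bmat_symm {n : ℕ} {P : Matrix (Fin n) (Fin n) ℝ} (hP : P.PosDef)
    (θhat : Fin n → ℝ) (χ : ℝ) (i j) : Bmat P θhat χ i j = Bmat P θhat χ j i := by
  have hs : (P⁻¹)ᵀ = P⁻¹ := by ext i j; exact Pinv_symm hP j i
  have h : θhat ᵥ* P⁻¹ = P⁻¹ *ᵥ θhat := by rw [← mulVec_transpose, hs]
  rcases i with i | i <;> rcases j with j | j
  · simpa [Bmat] using Pinv_symm hP i j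
  · simp [Bmat, h]
  · simp [Bmat, h]
  · simp [Bmat]

lemma Bform {n : ℕ} (P : Matrix (Fin n) (Fin n) ℝ) (θhat : Fin n → ℝ) (χ : ℝ)
    (θ : Fin n → ℝ) (t : ℝ) :
    (Sum.elim θ (fun _ : Unit => t)) ⬝ᵥ Bmat P θhat χ *ᵥ (Sum.elim θ (fun _ => t)) =
      (θ - t • θhat) ⬝ᵥ P⁻¹ *ᵥ (θ - t • θhat) - t ^ 2 * χ := by
  have e1 : (of fun (i : Fin n) (_ : Unit) => -(P⁻¹ *ᵥ θhat) i) *ᵥ (fun _ => t)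
      = -(t • (P⁻¹ *ᵥ θhat)) := by
    ext i; simp [mulVec, dotProduct]; ring
  have e2 : (of fun (_ : Unit) (j : Fin n) => -(θhat ᵥ* P⁻¹) j) *ᵥ θ
      = fun _ => -(θhat ⬝ᵥ P⁻¹ *ᵥ θ) := by
    ext i; rw [dotProduct_mulVec]; simp [mulVec, dotProduct]
  have e3 : (of fun (_ : Unit) (_ : Unit) => θhat ⬝ᵥ P⁻¹ *ᵥ θhat - χ) *ᵥ (fun _ => t)
      = fun _ => (θhat ⬝ᵥ P⁻¹ *ᵥ θhat - χ) * t := by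
    ext i; simp [mulVec, dotProduct]
  rw [Bmat, fromBlocks_mulVec, sumElim_dotProduct_sumElim]
  simp only [Sum.elim_comp_inl, Sum.elim_comp_inr]
  rw [e1, e2, e3]
  have e4 : ∀ a : Unit → ℝ, (fun _ : Unit => t) ⬝ᵥ a = t * a () := by
    intro a; simp [dotProduct]
  rw [e4]
  simp only [mulVec_sub, mulVec_smul, dotProduct_add, dotProduct_sub, sub_dotProduct,
    smul_dotProduct, dotProduct_smul, smul_eq_mul, dotProduct_neg, Pi.add_apply]
  ring

open scoped MatrixOrder Matrix.Norms.L2Operator in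
lemma block_psd {n : ℕ} (S : Matrix (Fin n ⊕ Unit) (Fin n ⊕ Unit) ℝ) (hS : S.PosSemidef) :
    (fromBlocks 0 0 0 (S.map (fun b => (b : ℂ))) :
      Matrix (Unit ⊕ (Fin n ⊕ Unit)) (Unit ⊕ (Fin n ⊕ Unit)) ℂ).PosSemidef := by
  obtain ⟨R, rfl⟩ : ∃ R : Matrix (Fin n ⊕ Unit) (Fin n ⊕ Unit) ℝ, S = Rᴴ * R := by
    classical
    exact CStarAlgebra.nonneg_iff_eq_star_mul_self.mp hS.nonneg
  have : (fromBlocks 0 0 0 ((Rᴴ * R).map (fun b => (b : ℂ))) :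
      Matrix (Unit ⊕ (Fin n ⊕ Unit)) (Unit ⊕ (Fin n ⊕ Unit)) ℂ) =
      (fromBlocks (0 : Matrix Unit Unit ℂ) 0 0 (R.map (fun b => (b : ℂ))))ᴴ *
      (fromBlocks 0 0 0 (R.map (fun b => (b : ℂ)))) := by
    rw [fromBlocks_conjTranspose, fromBlocks_multiply]
    simp only [conjTranspose_zero, Matrix.zero_mul, Matrix.mul_zero, add_zero, zero_add]
    congr 1
    ext i j
    simp [mul_apply]
  rw [this]
  exact posSemidef_conjTranspose_mul_self _

/-- The frequency-domain constraint in polynomial form. -/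
lemma disc_point {n : ℕ} (e : ℂ) (ZN ZD : Fin n → ℂ) (c : ℂ) (ρ : ℝ) (hρ : 0 < ρ)
    (θ : Fin n → ℝ) (hd : (1 : ℂ) + ∑ i, ZD i * (θ i : ℂ) ≠ 0) :
    ‖Tval e ZN ZD θ - c‖ ≤ ρ ↔
     0 ≤ (Sum.elim θ (fun _ => 1)) ⬝ᵥ (Mcore e ZN ZD c ρ).map Complex.re *ᵥ
        (Sum.elim θ (fun _ => 1)) := by
  rw [Qform]
  have h1 : ∑ i, dvec ZD i * ((Sum.elim θ (fun _ : Unit => (1:ℝ)) i : ℝ) : ℂ) =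
      1 + ∑ i, ZD i * (θ i : ℂ) := by
    simp [dvec, add_comm]
  have h2 : ∑ i, lamDisc e ZN ZD c i * ((Sum.elim θ (fun _ : Unit => (1:ℝ)) i : ℝ) : ℂ) =
      (Tval e ZN ZD θ - c) * (1 + ∑ i, ZD i * (θ i : ℂ)) := by
    rw [sub_mul, Tval, div_mul_cancel₀ _ hd]
    simp [lamDisc, sub_mul, Finset.sum_sub_distrib, mul_add, Finset.mul_sum, mul_assoc]
    ring
  rw [h1, h2, norm_mul]
  have hp : 0 < ‖(1 : ℂ) + ∑ i, ZD i * (θ i : ℂ)‖ := norm_pos_iff.mpr hd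
  rw [sub_nonneg, div_le_iff₀ (by positivity), ← mul_pow,
    pow_le_pow_iff_left₀ (by positivity) (by positivity) two_ne_zero, mul_comm,
    mul_le_mul_iff_right₀ hp]

/-- Disc embedding: `|T(θ) − c| ≤ ρ` holds for every `θ` in the ellipsoid `U` iff there
exist `ξ ≥ 0` and a real skew-symmetric matrix `𝒳` such that the Hermitian matrix
`[[−ρ², λ],[λ*, −A₁ − ξB + i𝒳]]` with `λ = [Z_N − c·Z_D , e − c]` is negative
semidefinite. -/
theorem disc_embedding_iff_LMI {n : ℕ} (e : ℂ) (ZN ZD : Fin n → ℂ)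
    (P : Matrix (Fin n) (Fin n) ℝ) (hP : P.PosDef)
    (θhat : Fin n → ℝ) (χ : ℝ) (hχ : 0 < χ)
    (hden : ∀ θ ∈ ellipsoid P θhat χ, (1 : ℂ) + ∑ i, ZD i * (θ i : ℂ) ≠ 0)
    (c : ℂ) (ρ : ℝ) (hρ : 0 < ρ) :
    (∀ θ ∈ ellipsoid P θhat χ, ‖Tval e ZN ZD θ - c‖ ≤ ρ) ↔
      ∃ ξ : ℝ, 0 ≤ ξ ∧
        ∃ X : Matrix (Fin n ⊕ Unit) (Fin n ⊕ Unit) ℝ, Xᵀ = -X ∧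
          (-(discMat e ZN ZD P θhat χ c ρ ξ X)).PosSemidef := by
  classical
  set Q : Matrix (Fin n ⊕ Unit) (Fin n ⊕ Unit) ℝ := (Mcore e ZN ZD c ρ).map Complex.re with hQ
  constructor
  · intro h
    have hsl := slemma_abs (fun x => x ⬝ᵥ Q *ᵥ x) (fun x => x ⬝ᵥ Bmat P θhat χ *ᵥ x)
      (quad_expand Q) (quad_expand _) (Sum.elim θhat (fun _ => 1)) (by
        simp only [Bform]; simpa using hχ) (by
        intro x hx
        obtain ⟨θ, t, rfl⟩ : ∃ θ t, x = Sum.elim θ (fun _ => t) :=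
          ⟨x ∘ Sum.inl, x (Sum.inr ()), by ext i; rcases i with i | i <;> rfl⟩
        simp only [Bform] at hx
        have ht : t ≠ 0 := by
          rintro rfl
          have := hP.inv.posSemidef.dotProduct_mulVec_nonneg θ
          simp at hx this
          linarith
        have hmem : t⁻¹ • θ ∈ ellipsoid P θhat χ := by
          have e1 : θ - t • θhat = t • (t⁻¹ • θ - θhat) := by
            rw [smul_sub, smul_inv_smul₀ ht]
          rw [e1] at hx
          simp only [mulVec_smul, smul_dotProduct, dotProduct_smul, smul_eq_mul] at hx
          have ht2 : 0 < t ^ 2 := by positivity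
          show _ < χ
          refine lt_of_mul_lt_mul_left ?_ ht2.le
          linarith
        have h3 := (disc_point e ZN ZD c ρ hρ _ (hden _ hmem)).mp (h _ hmem)
        have e2 : (Sum.elim θ (fun _ : Unit => t)) =
            t • (Sum.elim (t⁻¹ • θ) (fun _ : Unit => (1:ℝ))) := by
          ext i; rcases i with i | i <;> simp [ht]
        simp only [e2, mulVec_smul, smul_dotProduct, dotProduct_smul, smul_eq_mul]
        rw [← mul_assoc]
        exact mul_nonneg (mul_self_nonneg t) h3)
    obtain ⟨ξ, hξ, hpos⟩ := hsl
    refine ⟨ξ, hξ, (Mcore e ZN ZD c ρ).map Complex.im, ?_, ?_⟩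
    · ext i j
      have := congrArg Complex.im (Mcore_herm e ZN ZD c ρ i j)
      simp at this
      simp [this]
    · rw [disc_decomp _ _ _ _ _ _ _ _ hρ]
      refine (posSemidef_vecMulVec_star_self _).add ?_
      have hG : Gmat e ZN ZD P θhat χ c ρ ξ ((Mcore e ZN ZD c ρ).map Complex.im) =
          (Q + ξ • Bmat P θhat χ).map (fun b => (b : ℂ)) := by
        ext i j
        have := Complex.re_add_im (Mcore e ZN ZD c ρ i j)
        simp only [Gmat, hQ, map_apply, Matrix.add_apply, Matrix.smul_apply, smul_eq_mul]
        push_cast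
        linear_combination -this
      rw [hG]
      apply block_psd
      refine PosSemidef.of_dotProduct_mulVec_nonneg ?_ ?_
      · ext i j
        have h1 := congrArg Complex.re (Mcore_herm e ZN ZD c ρ i j)
        simp at h1
        simp [hQ, Bmat_symm hP θhat χ j i, h1]
      · intro x
        have := hpos x
        simpa [add_mulVec, smul_mulVec, dotProduct_add] using this
  · rintro ⟨ξ, hξ, X, hX, hpsd⟩ θ hθ
    rw [disc_point e ZN ZD c ρ hρ θ (hden θ hθ)]
    set x : Fin n ⊕ Unit → ℝ := Sum.elim θ (fun _ => 1) with hx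
    have hB : x ⬝ᵥ Bmat P θhat χ *ᵥ x < 0 := by
      rw [hx, Bform]
      have : _ < χ := hθ
      simpa using this
    have hρ' : (ρ : ℂ) ≠ 0 := by exact_mod_cast hρ.ne'
    set z : Fin n ⊕ Unit → ℂ := fun i => (x i : ℂ) with hz
    let w : Unit ⊕ (Fin n ⊕ Unit) → ℂ :=
      Sum.elim (fun _ => (lamDisc e ZN ZD c ⬝ᵥ z) / (ρ : ℂ) ^ 2) z
    have hw := hpsd.dotProduct_mulVec_nonneg w
    rw [disc_decomp _ _ _ _ _ _ _ _ hρ, add_mulVec, vecMulVec_mulVec] at hw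
    have hu : uvec e ZN ZD c ρ ⬝ᵥ w = 0 := by
      simp only [uvec, w, sumElim_dotProduct_sumElim]
      have : (fun j => -lamDisc e ZN ZD c j / (ρ : ℂ)) = (-(ρ : ℂ)⁻¹) • lamDisc e ZN ZD c := by
        ext j; simp; ring
      rw [this, smul_dotProduct]
      simp [dotProduct]
      field_simp
      ring
    rw [hu] at hw
    have hblk : star w ⬝ᵥ fromBlocks 0 0 0 (Gmat e ZN ZD P θhat χ c ρ ξ X) *ᵥ w =
        star z ⬝ᵥ Gmat e ZN ZD P θhat χ c ρ ξ X *ᵥ z := by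
      have : star w = Sum.elim (star (w ∘ Sum.inl)) (star z) := by
        ext i; rcases i with i | i <;> rfl
      rw [fromBlocks_mulVec, this, sumElim_dotProduct_sumElim]
      simp [w]
    have hw2 : 0 ≤ star z ⬝ᵥ Gmat e ZN ZD P θhat χ c ρ ξ X *ᵥ z := by
      rw [← hblk]; simpa using hw
    have hre := (Complex.le_def.mp hw2).1
    have hcalc : (star z ⬝ᵥ Gmat e ZN ZD P θhat χ c ρ ξ X *ᵥ z).re =
        x ⬝ᵥ Q *ᵥ x + ξ * (x ⬝ᵥ Bmat P θhat χ *ᵥ x) := by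
      have : x ⬝ᵥ Q *ᵥ x + ξ * (x ⬝ᵥ Bmat P θhat χ *ᵥ x) =
          x ⬝ᵥ (Q + ξ • Bmat P θhat χ) *ᵥ x := by
        simp [add_mulVec, smul_mulVec, dotProduct_add]
      rw [this]
      simp only [dotProduct, mulVec, Finset.mul_sum, Complex.re_sum]
      refine Finset.sum_congr rfl fun i _ => Finset.sum_congr rfl fun j _ => ?_
      simp [hz, Gmat, hQ]
    rw [hcalc] at hre
    simp only [Complex.zero_re] at hre
    nlinarith [mul_nonneg hξ (neg_pos.mpr hB).le]
end

section
/- (Global step, graph-separation sufficiency) Suppose there exist positive definite diagonal real matrices T¹, …, T^{N_d} ∈ ℝ^{N×N} such that the Hermitian matrix [M; I]* 𝒩 [M; I] ∈ ℂ^{(N+n_w)×(N+n_w)} is positive definite, where I is the (N+n_w)×(N+n_w) identity and 𝒩 is the Hermitian matrix acting on stacked vectors (r, z, y, w) ∈ ℂ^N × ℂ^{n_z} × ℂ^N × ℂ^{n_w} (with (r, z) = M(y, w)) whose quadratic form is r*(Σ_k T^k 𝒵^k)r − z*z + 2Re(y*(Σ_k T^k 𝒴^k)r) + y*(Σ_k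 T^k 𝒳^k)y + γ² w*w. Then for every diagonal matrix Δ = diag(Δ₁, …, Δ_N) ∈ ℂ^{N×N} such that each Δ_i satisfies x^k_i|Δ_i|² + 2Re(conj(y^k_i)·Δ_i) + z^k_i ≤ 0 for all k = 1, …, N_d, and such that I_N − M₁₁Δ is invertible, the largest singular value of M₂₂ + M₂₁Δ(I_N − M₁₁Δ)⁻¹M₁₂ is strictly less than γ. -/
open Matrix
open scoped ComplexOrder

/-- The Hermitian matrix `𝒩` acting on stacked vectors `(r, z, y, w)`, whose quadratic
form is `r*(Σ_k Tᵏ𝒵ᵏ)r − z*z + 2Re(y*(Σ_k Tᵏ𝒴ᵏ)r) + y*(Σ_k Tᵏ𝒳ᵏ)y + γ²w*w`. -/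
noncomputable def Nmat {N Nd nw nz : ℕ} (γ : ℝ)
    (x : Fin Nd → Fin N → ℝ) (y : Fin Nd → Fin N → ℂ) (z : Fin Nd → Fin N → ℝ)
    (t : Fin Nd → Fin N → ℝ) :
    Matrix ((Fin N ⊕ Fin nz) ⊕ (Fin N ⊕ Fin nw)) ((Fin N ⊕ Fin nz) ⊕ (Fin N ⊕ Fin nw)) ℂ :=
  Matrix.fromBlocks
    (Matrix.fromBlocks
      (∑ k : Fin Nd, Matrix.diagonal (fun i => (t k i : ℂ)) *
        Matrix.diagonal (fun i => (z k i : ℂ))) 0 0 (-1))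
    (Matrix.fromBlocks
      (∑ k : Fin Nd, Matrix.diagonal (fun i => (t k i : ℂ)) *
        Matrix.diagonal (fun i => y k i)) 0 0 0)ᴴ
    (Matrix.fromBlocks
      (∑ k : Fin Nd, Matrix.diagonal (fun i => (t k i : ℂ)) *
        Matrix.diagonal (fun i => y k i)) 0 0 0)
    (Matrix.fromBlocks
      (∑ k : Fin Nd, Matrix.diagonal (fun i => (t k i : ℂ)) *
        Matrix.diagonal (fun i => (x k i : ℂ))) 0 0 (((γ ^ 2 : ℝ) : ℂ) • 1))

/-- The stacked matrix `[M; I]` mapping `(y, w)` to `(r, z, y, w)`, where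
`M = [[M₁₁, M₁₂],[M₂₁, M₂₂]]`. -/
def stackMat {N nw nz : ℕ}
    (M11 : Matrix (Fin N) (Fin N) ℂ) (M12 : Matrix (Fin N) (Fin nw) ℂ)
    (M21 : Matrix (Fin nz) (Fin N) ℂ) (M22 : Matrix (Fin nz) (Fin nw) ℂ) :
    Matrix ((Fin N ⊕ Fin nz) ⊕ (Fin N ⊕ Fin nw)) (Fin N ⊕ Fin nw) ℂ :=
  Matrix.fromRows (Matrix.fromBlocks M11 M12 M21 M22) 1

lemma Nmat_form {N Nd nw nz : ℕ} (γ : ℝ)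
    (x : Fin Nd → Fin N → ℝ) (y : Fin Nd → Fin N → ℂ) (z : Fin Nd → Fin N → ℝ)
    (t : Fin Nd → Fin N → ℝ) (r u : Fin N → ℂ) (g : Fin nz → ℂ) (w : Fin nw → ℂ) :
    star (Sum.elim (Sum.elim r g) (Sum.elim u w)) ⬝ᵥ
      (Nmat (nw := nw) (nz := nz) γ x y z t *ᵥ Sum.elim (Sum.elim r g) (Sum.elim u w))
    = (∑ i, (star (r i) * ((∑ k, (t k i : ℂ) * (z k i : ℂ)) * r i)
        + star (r i) * (star (∑ k, (t k i : ℂ) * y k i) * u i)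
        + star (u i) * ((∑ k, (t k i : ℂ) * y k i) * r i)
        + star (u i) * ((∑ k, (t k i : ℂ) * (x k i : ℂ)) * u i)))
      - star g ⬝ᵥ g + star w ⬝ᵥ (((γ ^ 2 : ℝ) : ℂ) • w) := by
  have hdiag : ∀ a b : Fin Nd → Fin N → ℂ,
      (∑ k, Matrix.diagonal (fun i => a k i) * Matrix.diagonal (fun i => b k i))
        = Matrix.diagonal (fun i => ∑ k, a k i * b k i) := by
    intro a b
    ext i j
    by_cases h : i = j
    · subst h; simp [Matrix.sum_apply]
    · simp [Matrix.sum_apply, h]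
  have hst : star (Sum.elim (Sum.elim r g) (Sum.elim u w))
      = Sum.elim (Sum.elim (star r) (star g)) (Sum.elim (star u) (star w)) := by
    funext i
    rcases i with (i | i) | (i | i) <;> rfl
  have hN : Nmat (nw := nw) (nz := nz) γ x y z t *ᵥ Sum.elim (Sum.elim r g) (Sum.elim u w)
      = Sum.elim (Sum.elim (fun i => (∑ k, (t k i : ℂ) * (z k i : ℂ)) * r i
          + star (∑ k, (t k i : ℂ) * y k i) * u i) (-g))
        (Sum.elim (fun i => (∑ k, (t k i : ℂ) * y k i) * r i
          + (∑ k, (t k i : ℂ) * (x k i : ℂ)) * u i) (((γ ^ 2 : ℝ) : ℂ) • w)) := by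
    unfold Nmat
    rw [hdiag (fun k i => (t k i : ℂ)) (fun k i => (z k i : ℂ)),
      hdiag (fun k i => (t k i : ℂ)) (fun k i => y k i),
      hdiag (fun k i => (t k i : ℂ)) (fun k i => (x k i : ℂ)),
      Matrix.fromBlocks_conjTranspose, Matrix.diagonal_conjTranspose]
    simp only [Matrix.fromBlocks_mulVec, Sum.elim_comp_inl, Sum.elim_comp_inr,
      Matrix.conjTranspose_zero, Matrix.zero_mulVec, add_zero, zero_add,
      Matrix.neg_mulVec, Matrix.one_mulVec, Matrix.smul_mulVec]
    funext i
    rcases i with (i | i) | (i | i) <;> simp [Matrix.mulVec_diagonal]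
  rw [hst, hN]
  simp only [sumElim_dotProduct_sumElim, dotProduct_neg]
  simp only [dotProduct, mul_add, Finset.sum_add_distrib, Pi.star_apply]
  ring

/-- Global step (graph-separation sufficiency): if there exist positive-definite diagonal
multipliers `Tᵏ = diag(t k ·)` such that `[M; I]* 𝒩 [M; I] > 0`, then for every diagonal
`Δ = diag(Δᵢ)` with each `Δᵢ` `{xᵏᵢ, yᵏᵢ, zᵏᵢ}`-dissipative for all `k` and with
`I − M₁₁Δ` invertible, the largest singular value of
`M₂₂ + M₂₁Δ(I − M₁₁Δ)⁻¹M₁₂` is strictly less than `γ` (equivalently,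
`γ²I − F*F` is positive definite for `F = M₂₂ + M₂₁Δ(I − M₁₁Δ)⁻¹M₁₂`). -/
theorem global_step_graph_separation {N Nd nw nz : ℕ} (γ : ℝ) (hγ : 0 < γ)
    (M11 : Matrix (Fin N) (Fin N) ℂ) (M12 : Matrix (Fin N) (Fin nw) ℂ)
    (M21 : Matrix (Fin nz) (Fin N) ℂ) (M22 : Matrix (Fin nz) (Fin nw) ℂ)
    (x : Fin Nd → Fin N → ℝ) (y : Fin Nd → Fin N → ℂ) (z : Fin Nd → Fin N → ℝ)
    (t : Fin Nd → Fin N → ℝ) (ht : ∀ k i, 0 < t k i)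
    (hLMI : ((stackMat M11 M12 M21 M22)ᴴ * Nmat (nw := nw) (nz := nz) γ x y z t *
      stackMat M11 M12 M21 M22).PosDef) :
    ∀ Δ : Fin N → ℂ,
      (∀ i : Fin N, ∀ k : Fin Nd, Dissipative (x k i) (y k i) (z k i) (Δ i)) →
      IsUnit (1 - M11 * Matrix.diagonal Δ) →
      (((γ ^ 2 : ℝ) : ℂ) • (1 : Matrix (Fin nw) (Fin nw) ℂ) -
        (M22 + M21 * Matrix.diagonal Δ * (1 - M11 * Matrix.diagonal Δ)⁻¹ * M12)ᴴ *
        (M22 + M21 * Matrix.diagonal Δ * (1 - M11 * Matrix.diagonal Δ)⁻¹ * M12)).PosDef := by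
  intro Δ hΔ hU
  set D := Matrix.diagonal Δ with hD
  set R := (1 - M11 * D)⁻¹ with hR
  set F := M22 + M21 * D * R * M12 with hF
  have hdet : IsUnit (1 - M11 * D).det := (Matrix.isUnit_iff_isUnit_det _).1 hU
  have hinv : (1 - M11 * D) * R = 1 := Matrix.mul_nonsing_inv _ hdet
  have hR2 : R = M11 * D * R + 1 := by
    rw [sub_mul, one_mul] at hinv
    rw [← hinv]; abel
  refine Matrix.PosDef.of_dotProduct_mulVec_pos ?_ ?_
  · refine Matrix.IsHermitian.sub ?_ (Matrix.isHermitian_conjTranspose_mul_self F)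
    simp [Matrix.IsHermitian, Matrix.conjTranspose_smul]
  intro w hw
  set r := R *ᵥ (M12 *ᵥ w) with hr
  set u := D *ᵥ r with hu
  have hr2 : M11 *ᵥ u + M12 *ᵥ w = r := by
    rw [hu, hr]
    conv_rhs => rw [hR2]
    simp [Matrix.add_mul, Matrix.add_mulVec, Matrix.mulVec_mulVec, Matrix.mul_assoc]
  have hz : M21 *ᵥ u + M22 *ᵥ w = F *ᵥ w := by
    rw [hu, hr, hF]
    simp [Matrix.add_mulVec, Matrix.mulVec_mulVec, Matrix.mul_assoc, add_comm]
  have hv : Sum.elim u w ≠ 0 := by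
    intro h
    apply hw
    funext i
    exact congrFun h (Sum.inr i)
  have key := hLMI.dotProduct_mulVec_pos hv
  have hS : stackMat M11 M12 M21 M22 *ᵥ Sum.elim u w
      = Sum.elim (Sum.elim r (F *ᵥ w)) (Sum.elim u w) := by
    simp [stackMat, Matrix.fromRows_mulVec, Matrix.fromBlocks_mulVec, hr2, hz]
  rw [← Matrix.mulVec_mulVec, ← Matrix.mulVec_mulVec, Matrix.dotProduct_mulVec,
    ← Matrix.star_mulVec, hS] at key
  have hexp : star (Sum.elim (Sum.elim r (F *ᵥ w)) (Sum.elim u w)) ⬝ᵥ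
      (Nmat (nw := nw) (nz := nz) γ x y z t *ᵥ Sum.elim (Sum.elim r (F *ᵥ w)) (Sum.elim u w))
      = ((∑ i, ∑ k, t k i * Complex.normSq (r i) * (x k i * Complex.normSq (Δ i) +
          2 * (starRingEnd ℂ (y k i) * Δ i).re + z k i) : ℝ) : ℂ)
        + star w ⬝ᵥ ((((γ ^ 2 : ℝ) : ℂ) • (1 : Matrix (Fin nw) (Fin nw) ℂ) - Fᴴ * F) *ᵥ w) := by
    have hu2 : u = fun i => Δ i * r i := by
      funext i
      rw [hu, hD, Matrix.mulVec_diagonal]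
    rw [sub_mulVec, dotProduct_sub, ← Matrix.mulVec_mulVec, Matrix.dotProduct_mulVec (star w) Fᴴ,
      ← Matrix.star_mulVec, Nmat_form, hu2]
    rw [Matrix.smul_mulVec, Matrix.one_mulVec]
    have hsum : (∑ i, (star (r i) * ((∑ k, (t k i : ℂ) * (z k i : ℂ)) * r i)
        + star (r i) * (star (∑ k, (t k i : ℂ) * y k i) * (Δ i * r i))
        + star (Δ i * r i) * ((∑ k, (t k i : ℂ) * y k i) * r i)
        + star (Δ i * r i) * ((∑ k, (t k i : ℂ) * (x k i : ℂ)) * (Δ i * r i))))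
        = ((∑ i, ∑ k, t k i * Complex.normSq (r i) * (x k i * Complex.normSq (Δ i) +
          2 * (starRingEnd ℂ (y k i) * Δ i).re + z k i) : ℝ) : ℂ) := by
      push_cast
      refine Finset.sum_congr rfl fun i _ => ?_
      simp only [star_sum, Finset.sum_mul, Finset.mul_sum, ← Finset.sum_add_distrib]
      refine Finset.sum_congr rfl fun k _ => ?_
      apply Complex.ext <;> simp [Complex.normSq_apply] <;> ring
    rw [hsum]
    ring
  rw [hexp] at key
  have hle : (∑ i, ∑ k, t k i * Complex.normSq (r i) * (x k i * Complex.normSq (Δ i) +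
          2 * (starRingEnd ℂ (y k i) * Δ i).re + z k i)) ≤ 0 := by
    refine Finset.sum_nonpos fun i _ => Finset.sum_nonpos fun k _ => ?_
    exact mul_nonpos_of_nonneg_of_nonpos
      (mul_nonneg (ht k i).le (Complex.normSq_nonneg _)) (hΔ i k)
  refine lt_of_lt_of_le key ?_
  have : ((∑ i, ∑ k, t k i * Complex.normSq (r i) * (x k i * Complex.normSq (Δ i) +
          2 * (starRingEnd ℂ (y k i) * Δ i).re + z k i) : ℝ) : ℂ) ≤ 0 := by
    exact_mod_cast hle
  exact add_le_of_nonpos_left this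
end

section
/- Let x > 0, y ∈ ℂ, z ∈ ℝ with α := |y|²/x² − z/x > 0, and let θ ∈ ℝⁿ satisfy 1 + Z_D·θ ≠ 0. Then T(θ) = (e + Z_N·θ)/(1 + Z_D·θ) satisfies the dissipativity inequality x|T(θ)|² + 2Re(conj(y)·T(θ)) + z ≤ 0 if and only if the augmented real vector θ̄ = [θᵀ, 1]ᵀ satisfies θ̄ᵀ((1/α)·λ*λ − A₁)θ̄ ≤ 0, where λ = [Z_N + (y/x)Z_D , e + y/x] ∈ ℂ^{1×(n+1)} and A₁ = [[Z_D*Z_D, Z_D*],[Z_D, 1]] ∈ ℂ^{(n+1)×(n+1)}. -/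
open Matrix

/-- The augmented vector `θ̄ = [θᵀ, 1]ᵀ`, regarded as a complex vector. -/
def thetaBar {n : ℕ} (θ : Fin n → ℝ) : Fin n ⊕ Unit → ℂ :=
  Sum.elim (fun i => (θ i : ℂ)) (fun _ => (1 : ℂ))

/-- Let `x > 0`, `α := |y|²/x² − z/x > 0` and `1 + Z_D·θ ≠ 0`.  Then
`T(θ) = (e + Z_N·θ)/(1 + Z_D·θ)` satisfies `x|T(θ)|² + 2Re(conj(y)·T(θ)) + z ≤ 0` iff the
augmented real vector `θ̄ = [θᵀ, 1]ᵀ` satisfies `θ̄ᵀ((1/α)λ*λ − A₁)θ̄ ≤ 0`, where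
`λ = [Z_N + (y/x)Z_D , e + y/x]`. -/
theorem dissipative_iff_quadratic {n : ℕ} (e : ℂ) (ZN ZD : Fin n → ℂ)
    (x : ℝ) (hx : 0 < x) (y : ℂ) (z : ℝ)
    (α : ℝ) (hαdef : α = Complex.normSq y / x ^ 2 - z / x) (hα : 0 < α)
    (θ : Fin n → ℝ) (hden : (1 : ℂ) + ∑ i, ZD i * (θ i : ℂ) ≠ 0) :
    x * Complex.normSq (Tval e ZN ZD θ) +
        2 * (starRingEnd ℂ y * Tval e ZN ZD θ).re + z ≤ 0 ↔
      (star (thetaBar θ) ⬝ᵥ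
          ((((α : ℂ))⁻¹ •
              Matrix.vecMulVec (star (lamVec e ZN ZD x y)) (lamVec e ZN ZD x y) -
            A1mat ZD) *ᵥ thetaBar θ)).re ≤ 0 := by
  have hquad : ∀ l v : Fin n ⊕ Unit → ℂ,
      star v ⬝ᵥ (Matrix.vecMulVec (star l) l *ᵥ v) = (Complex.normSq (l ⬝ᵥ v) : ℂ) := by
    intro l v
    rw [Complex.normSq_eq_conj_mul_self, Matrix.vecMulVec_mulVec, op_smul_eq_smul,
      dotProduct_smul, smul_eq_mul, mul_comm]
    congr 1
    exact Matrix.star_dotProduct_star v l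
  have hA : A1mat ZD = Matrix.vecMulVec (star (Sum.elim ZD (fun _ => (1 : ℂ))))
      (Sum.elim ZD (fun _ => (1 : ℂ))) := by
    ext i j
    rcases i with i | i <;> rcases j with j | j <;> simp [A1mat, Matrix.vecMulVec_apply]
  have hd : (Sum.elim ZD (fun _ : Unit => (1 : ℂ))) ⬝ᵥ thetaBar θ =
      1 + ∑ i, ZD i * (θ i : ℂ) := by
    simp [thetaBar, dotProduct, add_comm]
  have hl : lamVec e ZN ZD x y ⬝ᵥ thetaBar θ =
      (e + ∑ i, ZN i * (θ i : ℂ)) + y / x * (1 + ∑ i, ZD i * (θ i : ℂ)) := by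
    simp only [thetaBar, lamVec, dotProduct, Fintype.sum_sum_type, Sum.elim_inl, Sum.elim_inr,
      Finset.univ_unique, Finset.sum_singleton, add_mul, Finset.sum_add_distrib, mul_add,
      Finset.mul_sum, mul_assoc]
    ring
  rw [hA, Matrix.sub_mulVec, dotProduct_sub, Matrix.smul_mulVec, dotProduct_smul, hquad, hquad,
    hd, hl]
  unfold Tval
  generalize (e + ∑ i, ZN i * (θ i : ℂ)) = N
  generalize (1 + ∑ i, ZD i * (θ i : ℂ)) = D at *
  obtain ⟨T, rfl⟩ : ∃ T, N = T * D := ⟨N / D, by field_simp⟩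
  have hD : 0 < Complex.normSq D := Complex.normSq_pos.mpr hden
  rw [mul_div_cancel_right₀ _ hden, ← add_mul, Complex.normSq_mul, smul_eq_mul,
    ← Complex.ofReal_inv, ← Complex.ofReal_mul, ← Complex.ofReal_sub, Complex.ofReal_re]
  have h1 : x * Complex.normSq T + 2 * (starRingEnd ℂ y * T).re + z =
      x * (Complex.normSq (T + y / x) - α) := by
    rw [hαdef]
    simp only [Complex.normSq_apply, Complex.add_re, Complex.add_im, Complex.div_ofReal_re,
      Complex.div_ofReal_im, Complex.mul_re, Complex.conj_re, Complex.conj_im]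
    field_simp
    ring
  have h2 : α⁻¹ * (Complex.normSq (T + y / x) * Complex.normSq D) - Complex.normSq D =
      (α⁻¹ * Complex.normSq D) * (Complex.normSq (T + y / x) - α) := by
    field_simp
  rw [h1, h2]
  have h3 : 0 < α⁻¹ * Complex.normSq D := by positivity
  constructor
  · intro h
    exact mul_nonpos_of_nonneg_of_nonpos h3.le (nonpos_of_mul_nonpos_right h hx)
  · intro h
    exact mul_nonpos_of_nonneg_of_nonpos hx.le (nonpos_of_mul_nonpos_right h h3)
end

section
/- Let y ∈ ℂ, z ∈ ℝ, and let θ ∈ ℝⁿ satisfy 1 + Z_D·θ ≠ 0. Then T(θ) = (e + Z_N·θ)/(1 + Z_D·θ) satisfies 2Re(conj(y)·T(θ)) + z ≤ 0 if and only if the augmented real vector θ̄ = [θᵀ, 1]ᵀ satisfies θ̄ᵀ(A₂*·y + conj(y)·A₂ + z·A₁)θ̄ ≤ 0, where A₁ = [[Z_D*Z_D, Z_D*],[Z_D, 1]] and A₂ = [[Z_D*Z_N, Z_D*e],[Z_N, e]] are matrices in ℂ^{(n+1)×(n+1)}. -/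
open Matrix

/-- The matrix `A₂ = [[Z_D*Z_N, Z_D*e],[Z_N, e]] ∈ ℂ^{(n+1)×(n+1)}`. -/
def A2mat {n : ℕ} (e : ℂ) (ZN ZD : Fin n → ℂ) : Matrix (Fin n ⊕ Unit) (Fin n ⊕ Unit) ℂ :=
  Matrix.fromBlocks
    (Matrix.of fun i j => starRingEnd ℂ (ZD i) * ZN j)
    (Matrix.of fun i _ => starRingEnd ℂ (ZD i) * e)
    (Matrix.of fun _ j => ZN j)
    (Matrix.of fun _ _ => e)

theorem A1mat_eq {n : ℕ} (ZD : Fin n → ℂ) :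
    A1mat ZD = Matrix.vecMulVec (star (Sum.elim ZD fun _ => 1)) (Sum.elim ZD fun _ => 1) := by
  ext i j
  rcases i with i | i <;> rcases j with j | j <;> simp [A1mat, Matrix.vecMulVec_apply]

theorem A2mat_eq {n : ℕ} (e : ℂ) (ZN ZD : Fin n → ℂ) :
    A2mat e ZN ZD =
      Matrix.vecMulVec (star (Sum.elim ZD fun _ => 1)) (Sum.elim ZN fun _ => e) := by
  ext i j
  rcases i with i | i <;> rcases j with j | j <;> simp [A2mat, Matrix.vecMulVec_apply]

theorem quad_aux {n : ℕ} (d m v : Fin n ⊕ Unit → ℂ) :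
    star v ⬝ᵥ (Matrix.vecMulVec (star d) m *ᵥ v) = star (d ⬝ᵥ v) * (m ⬝ᵥ v) := by
  rw [Matrix.vecMulVec_mulVec, dotProduct_smul, Matrix.star_dotProduct_star]
  rfl

theorem dot_thetaBar {n : ℕ} (Z : Fin n → ℂ) (c : ℂ) (θ : Fin n → ℝ) :
    (Sum.elim Z fun _ => c) ⬝ᵥ thetaBar θ = c + ∑ i, Z i * (θ i : ℂ) := by
  simp [dotProduct, thetaBar, add_comm]

/-- For `y ∈ ℂ`, `z ∈ ℝ` and `θ` with `1 + Z_D·θ ≠ 0`, the transfer function value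
`T(θ) = (e + Z_N·θ)/(1 + Z_D·θ)` satisfies `2Re(conj(y)·T(θ)) + z ≤ 0` iff the augmented
real vector `θ̄ = [θᵀ, 1]ᵀ` satisfies `θ̄ᵀ(A₂*·y + conj(y)·A₂ + z·A₁)θ̄ ≤ 0`. -/
theorem dissipative_x_zero_iff_quadratic {n : ℕ} (e : ℂ) (ZN ZD : Fin n → ℂ)
    (y : ℂ) (z : ℝ)
    (θ : Fin n → ℝ) (hden : (1 : ℂ) + ∑ i, ZD i * (θ i : ℂ) ≠ 0) :
    2 * (starRingEnd ℂ y * Tval e ZN ZD θ).re + z ≤ 0 ↔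
      (star (thetaBar θ) ⬝ᵥ
          ((y • (A2mat e ZN ZD)ᴴ + starRingEnd ℂ y • A2mat e ZN ZD +
              (z : ℂ) • A1mat ZD) *ᵥ thetaBar θ)).re ≤ 0 := by
  have hA2 : (A2mat e ZN ZD)ᴴ =
      Matrix.vecMulVec (star (Sum.elim ZN fun _ => e)) (Sum.elim ZD fun _ => 1) := by
    rw [A2mat_eq, Matrix.conjTranspose_vecMulVec, star_star]
  rw [hA2, A2mat_eq, A1mat_eq]
  simp only [Matrix.add_mulVec, Matrix.smul_mulVec, dotProduct_add, dotProduct_smul, quad_aux,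
    dot_thetaBar, Tval]
  generalize e + ∑ i, ZN i * (θ i : ℂ) = N
  generalize (1 : ℂ) + ∑ i, ZD i * (θ i : ℂ) = D at hden ⊢
  obtain ⟨T, rfl⟩ : ∃ T, N = T * D := ⟨N / D, by field_simp⟩
  rw [mul_div_assoc, div_self hden, mul_one]
  have hpos : 0 < Complex.normSq D := Complex.normSq_pos.mpr hden
  have key : (y • (star (T * D) * D) + (starRingEnd ℂ) y • (star D * (T * D)) +
      (z : ℂ) • (star D * D)).re =
      Complex.normSq D * (2 * (starRingEnd ℂ y * T).re + z) := by
    simp [Complex.normSq_apply]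
    ring
  rw [key]
  constructor
  · intro h
    exact mul_nonpos_of_nonneg_of_nonpos hpos.le h
  · intro h
    exact nonpos_of_mul_nonpos_right h hpos
end
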